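/- arXiv:2605.28012 — 3 statements merged into one kernel-verified Lean document; each statement's English description precedes it below -/
import Mathlib

section
/- Let r, s > 1 and let m_1, ..., m_r be nonnegative integers and n_1, ..., n_s be positive integers, with the cyclic conventions m_{r+1} = m_1 and n_{s+1} = n_1. Then for all integers a, b with 0 ≤ a ≤ s and 1 ≤ b ≤ r, the alternating sum F_{r,s}^{(b)}(m; n; a; q) is a polynomial in q with nonnegative integer coefficients. -/
open Finset

noncomputable section

/-- The `q`-integer `[n] = (1 - x^n)/(1 - x)` at the value `x`. -/
def qint (x : RatFunc ℚ) (n : ℕ) : RatFunc ℚ := (1 - x ^ n) / (1 - x)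

/-- The `q`-factorial `[n]! = [1][2]⋯[n]`, with `[0]! = 1`. -/
def qfact (x : RatFunc ℚ) (n : ℕ) : RatFunc ℚ := ∏ i ∈ Finset.range n, qint x (i + 1)

/-- The Gaussian (q-binomial) coefficient `[N choose K]`, equal to
`[N]!/([K]![N-K]!)` if `0 ≤ K ≤ N`, and `0` otherwise. -/
def qbinom (x : RatFunc ℚ) (N K : ℤ) : RatFunc ℚ :=
  if 0 ≤ K ∧ K ≤ N then qfact x N.toNat / (qfact x K.toNat * qfact x (N - K).toNat) else 0

/-- The alternating sum `F_{r,s}^{(b)}(m; n; a; x)`.  The cyclic vectors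
`(m_1, …, m_r)` and `(n_1, …, n_s)` are given as functions `m n : ℕ → ℕ` on
`0, …, r-1` and `0, …, s-1` respectively, with cyclic successor `(i+1) % r`
(so `m_{r+1} = m_1` and `n_{s+1} = n_1`). -/
def F (r s a b : ℕ) (m n : ℕ → ℕ) (x : RatFunc ℚ) : RatFunc ℚ :=
  (qfact x (m 0) * qfact x (n 0) * qfact x (m (r - 1) + n (s - 1) + 1)) /
      (qfact x (m 0 + m (r - 1) + 1) * qfact x (n 0 + n (s - 1))) *
    ∑ k ∈ Finset.Icc (-(n 0 : ℤ)) ((n 0 : ℤ)),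
      (-1 : RatFunc ℚ) ^ k *
        x ^ ((a : ℤ) * k ^ 2 + (2 * (b : ℤ) - 1) * (k * (k - 1) / 2)) *
        (∏ i ∈ Finset.range r,
          qbinom x ((m i : ℤ) + (m ((i + 1) % r) : ℤ) + 1) ((m i : ℤ) + k)) *
        (∏ j ∈ Finset.range s,
          qbinom x ((n j : ℤ) + (n ((j + 1) % s) : ℤ)) ((n j : ℤ) + k))

/-- A rational function lies in `ℕ[q]` if it equals a polynomial in `q`
with nonnegative integer coefficients. -/
def IsNonnegPoly (f : RatFunc ℚ) : Prop :=
  ∃ p : Polynomial ℕ, f = algebraMap (Polynomial ℚ) (RatFunc ℚ) (p.map (Nat.castRingHom ℚ))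

/-! ### Powers of the variable -/

lemma X_zpow_add (i j : ℤ) :
    (RatFunc.X : RatFunc ℚ) ^ (i + j) = RatFunc.X ^ i * RatFunc.X ^ j :=
  zpow_add₀ RatFunc.X_ne_zero i j

lemma X_pow_ne_one {n : ℕ} (hn : n ≠ 0) : (RatFunc.X : RatFunc ℚ) ^ n ≠ 1 := by
  intro h
  have h' : (Polynomial.X : Polynomial ℚ) ^ n = 1 := by
    apply RatFunc.algebraMap_injective ℚ
    simpa using h
  have := congrArg Polynomial.natDegree h'
  simp [hn] at this

lemma one_sub_X_ne_zero : (1 - RatFunc.X : RatFunc ℚ) ≠ 0 := by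
  intro h
  exact X_pow_ne_one one_ne_zero (by rw [pow_one]; exact (sub_eq_zero.mp h).symm)

lemma qfact_succ (x : RatFunc ℚ) (n : ℕ) : qfact x (n + 1) = qfact x n * qint x (n + 1) :=
  Finset.prod_range_succ _ _

lemma qfact_zero (x : RatFunc ℚ) : qfact x 0 = 1 := Finset.prod_range_zero _

lemma qfact_X_ne_zero (n : ℕ) : qfact RatFunc.X n ≠ 0 := by
  refine Finset.prod_ne_zero_iff.mpr fun i _ => div_ne_zero ?_ one_sub_X_ne_zero
  exact sub_ne_zero.mpr (X_pow_ne_one i.succ_ne_zero).symm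

/-! ### Nonnegative polynomials -/

namespace IsNonnegPoly

lemma zero : IsNonnegPoly 0 := ⟨0, by simp⟩

lemma X_pow (n : ℕ) : IsNonnegPoly (RatFunc.X ^ n) := ⟨Polynomial.X ^ n, by simp⟩

lemma one : IsNonnegPoly 1 := by simpa using X_pow 0

lemma add {f g : RatFunc ℚ} : IsNonnegPoly f → IsNonnegPoly g → IsNonnegPoly (f + g) := by
  rintro ⟨p, rfl⟩ ⟨p', rfl⟩
  exact ⟨p + p', by simp⟩

lemma mul {f g : RatFunc ℚ} : IsNonnegPoly f → IsNonnegPoly g → IsNonnegPoly (f * g) := by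
  rintro ⟨p, rfl⟩ ⟨p', rfl⟩
  exact ⟨p * p', by simp⟩

lemma sum {ι : Type*} {s : Finset ι} {f : ι → RatFunc ℚ} (h : ∀ i ∈ s, IsNonnegPoly (f i)) :
    IsNonnegPoly (∑ i ∈ s, f i) :=
  Finset.sum_induction f IsNonnegPoly (fun _ _ => add) zero h

lemma X_zpow {z : ℤ} (hz : 0 ≤ z) : IsNonnegPoly (RatFunc.X ^ z) := by
  lift z to ℕ using hz
  simpa using X_pow z

end IsNonnegPoly

/-! ### Reciprocal factorials and Gaussian coefficients at integer arguments -/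

/-- The reciprocal `1/[z]!` of the `q`-factorial, extended by `0` to negative `z`. -/
def invQfact (z : ℤ) : RatFunc ℚ := if 0 ≤ z then (qfact RatFunc.X z.toNat)⁻¹ else 0

/-- The `q`-integer `[z]` at an integer `z`. -/
def zqint (z : ℤ) : RatFunc ℚ := (1 - RatFunc.X ^ z) / (1 - RatFunc.X)

lemma invQfact_of_neg {z : ℤ} (hz : z < 0) : invQfact z = 0 := if_neg (not_le.mpr hz)

lemma invQfact_natCast (n : ℕ) : invQfact n = (qfact RatFunc.X n)⁻¹ := by simp [invQfact]

lemma qfact_mul_invQfact (n : ℕ) : qfact RatFunc.X n * invQfact n = 1 := by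
  rw [invQfact_natCast, mul_inv_cancel₀ (qfact_X_ne_zero n)]

lemma invQfact_zero : invQfact 0 = 1 := by simp [invQfact, qfact_zero]

lemma invQfact_eq (z : ℤ) : invQfact z = zqint (z + 1) * invQfact (z + 1) := by
  rcases lt_trichotomy z (-1) with hz | rfl | hz
  · rw [invQfact_of_neg (by omega), invQfact_of_neg (by omega), mul_zero]
  · simp [invQfact_of_neg, zqint]
  · lift z to ℕ using by omega
    have h0 := qfact_X_ne_zero (z + 1)
    have h1 := qfact_X_ne_zero z
    have h : zqint ((z : ℤ) + 1) = qint RatFunc.X (z + 1) := by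
      simp only [zqint, qint]; norm_cast
    rw [h, invQfact_natCast, show (z : ℤ) + 1 = ((z + 1 : ℕ) : ℤ) by push_cast; rfl,
      invQfact_natCast]
    rw [qfact_succ] at h0 ⊢
    have h2 := right_ne_zero_of_mul h0
    field_simp

/-- The Gaussian coefficient with a natural upper and an integer lower argument. -/
def gaussCoeff (N : ℕ) (K : ℤ) : RatFunc ℚ :=
  qfact RatFunc.X N * invQfact K * invQfact (N - K)

lemma qbinom_eq_gaussCoeff (N : ℕ) (K : ℤ) : qbinom RatFunc.X N K = gaussCoeff N K := by
  unfold qbinom gaussCoeff invQfact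
  by_cases h : 0 ≤ K ∧ K ≤ N
  · rw [if_pos h, if_pos h.1, if_pos (by omega)]
    simp [div_eq_mul_inv, mul_assoc, mul_comm]
  · rw [if_neg h]
    rcases not_and_or.mp h with h | h
    · rw [if_neg h]; simp
    · rw [if_neg (c := 0 ≤ (N : ℤ) - K) (by omega)]; simp

lemma gaussCoeff_of_neg (N : ℕ) {K : ℤ} (h : K < 0) : gaussCoeff N K = 0 := by
  simp [gaussCoeff, invQfact_of_neg h]

lemma gaussCoeff_of_lt {N : ℕ} {K : ℤ} (h : N < K) : gaussCoeff N K = 0 := by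
  simp [gaussCoeff, invQfact_of_neg (show (N : ℤ) - K < 0 by omega)]

lemma gaussCoeff_symm (N : ℕ) (K : ℤ) : gaussCoeff N (N - K) = gaussCoeff N K := by
  simp only [gaussCoeff, sub_sub_cancel]; ring

lemma zqint_add (i j : ℤ) : zqint (i + j) = zqint i + RatFunc.X ^ i * zqint j := by
  simp only [zqint, X_zpow_add]
  have := one_sub_X_ne_zero
  field_simp
  ring

lemma gaussCoeff_succ (N : ℕ) (K : ℤ) :
    gaussCoeff (N + 1) K =
      gaussCoeff N K + RatFunc.X ^ ((N : ℤ) + 1 - K) * gaussCoeff N (K - 1) := by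
  have h : qint RatFunc.X (N + 1) =
      zqint (N + 1 - K) + RatFunc.X ^ ((N : ℤ) + 1 - K) * zqint K := by
    rw [← zqint_add, zqint, qint]
    congr 2
    rw [← zpow_natCast]; congr 1; push_cast; ring
  simp only [gaussCoeff, qfact_succ, h]
  rw [invQfact_eq (N - K), invQfact_eq (K - 1), show (N : ℤ) - K + 1 = N + 1 - K by ring,
    show ((N + 1 : ℕ) : ℤ) - K = N + 1 - K by push_cast; ring,
    show (N : ℤ) - (K - 1) = N + 1 - K by ring, sub_add_cancel]
  ring

lemma gaussCoeff_succ' (N : ℕ) (K : ℤ) :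
    gaussCoeff (N + 1) K = RatFunc.X ^ K * gaussCoeff N K + gaussCoeff N (K - 1) := by
  rw [← gaussCoeff_symm, gaussCoeff_succ, ← gaussCoeff_symm N (K - 1), ← gaussCoeff_symm N K,
    add_comm]
  push_cast
  ring_nf

lemma gaussCoeff_zero (K : ℤ) : gaussCoeff 0 K = if K = 0 then 1 else 0 := by
  split_ifs with h
  · simp [h, gaussCoeff, qfact_zero, invQfact_zero]
  · rcases lt_or_gt_of_ne h with h | h
    · exact gaussCoeff_of_neg _ h
    · exact gaussCoeff_of_lt (by simpa using h)

lemma isNonnegPoly_gaussCoeff (N : ℕ) (K : ℤ) : IsNonnegPoly (gaussCoeff N K) := by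
  induction N generalizing K with
  | zero =>
    rw [gaussCoeff_zero]
    split_ifs
    exacts [.one, .zero]
  | succ N ih =>
    rcases lt_or_ge K 0 with h | h
    · rw [gaussCoeff_of_neg _ h]; exact .zero
    · rw [gaussCoeff_succ']
      exact ((IsNonnegPoly.X_zpow h).mul (ih _)).add (ih _)

/-! ### The `q`-Chu–Vandermonde identity -/

theorem gaussCoeff_vandermonde (α γ : ℕ) (β : ℤ) :
    gaussCoeff (α + γ) β = ∑ j ∈ Finset.range (α + 1),
      RatFunc.X ^ ((j : ℤ) * (γ - β + j)) * gaussCoeff α j * gaussCoeff γ (β - j) := by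
  induction α generalizing γ with
  | zero => simp [gaussCoeff_zero]
  | succ α ih =>
    rw [show α + 1 + γ = α + (γ + 1) by ring, ih (γ + 1)]
    simp only [gaussCoeff_succ' α, gaussCoeff_succ γ, mul_add, add_mul, Finset.sum_add_distrib]
    congr 1
    · rw [Finset.sum_range_succ _ (α + 1), gaussCoeff_of_lt (N := α) (by push_cast; omega)]
      simp only [mul_zero, zero_mul, add_zero]
      refine Finset.sum_congr rfl fun j _ => ?_
      rw [← mul_assoc (RatFunc.X ^ _), ← X_zpow_add]
      congr 3
      push_cast; ring
    · rw [Finset.sum_range_succ' _ (α + 1), gaussCoeff_of_neg α (by simp)]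
      simp only [mul_zero, zero_mul, add_zero]
      refine Finset.sum_congr rfl fun j _ => ?_
      rw [show ((j + 1 : ℕ) : ℤ) - 1 = j by push_cast; ring,
        show β - j - 1 = β - (j + 1 : ℕ) by push_cast; ring,
        show ((j + 1 : ℕ) : ℤ) * (γ - β) + (j + 1 : ℕ) * (j + 1 : ℕ) =
          (j : ℤ) * ((γ + 1 : ℕ) - β) + j * j + (γ + 1 - (β - j)) by push_cast; ring,
        X_zpow_add _ ((γ : ℤ) + 1 - (β - j))]
      ring

theorem gaussCoeff_vandermonde' (α γ : ℕ) (β : ℤ) :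
    gaussCoeff (α + γ) β = ∑ j ∈ Finset.range (α + 1),
      RatFunc.X ^ ((α - j : ℤ) * (β - j)) * gaussCoeff α j * gaussCoeff γ (β - j) := by
  rw [← gaussCoeff_symm, gaussCoeff_vandermonde, ← Finset.sum_range_reflect]
  refine Finset.sum_congr rfl fun j hj => ?_
  have hj : j ≤ α := Nat.lt_succ_iff.mp (Finset.mem_range.mp hj)
  rw [show α + 1 - 1 - j = α - j by omega, ← gaussCoeff_symm α j, ← gaussCoeff_symm γ (β - j)]
  push_cast [hj]
  rw [show (α + γ - β - (α - j) : ℤ) = γ - (β - j) by ring,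
    show (γ - (α + γ - β) + (α - j) : ℤ) = β - j by ring]

/-- Passage from a Vandermonde sum over `j` to a sum over `t = n₁ - j`. -/
lemma merge_of_vandermonde (E : ℤ → ℤ) {c : ℤ} (hc0 : 0 ≤ c) (hc1 : c ≤ 1) (n₁ n₂ : ℕ) (k : ℤ)
    (h : ∀ α γ : ℕ, (α : ℤ) = n₁ + c - k → (γ : ℤ) = n₂ + k →
      gaussCoeff (α + γ) (n₁ + k) = ∑ j ∈ Finset.range (α + 1),
        RatFunc.X ^ E (n₁ - j) * gaussCoeff α j * gaussCoeff γ (n₁ + k - j)) :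
    invQfact (n₁ + k) * invQfact (n₁ + c - k) * (invQfact (n₂ + k) * invQfact (n₂ + c - k)) =
      invQfact (n₁ + n₂ + c) * ∑ t ∈ Finset.range (n₁ + 1),
        RatFunc.X ^ E t * invQfact (n₁ - t) * invQfact (n₂ - t) *
          (invQfact (t + k) * invQfact (t + c - k)) := by
  by_cases hk : 0 ≤ (n₁ : ℤ) + k ∧ 0 ≤ (n₁ : ℤ) + c - k ∧ 0 ≤ (n₂ : ℤ) + k ∧ 0 ≤ (n₂ : ℤ) + c - k
  · obtain ⟨h1, h2, h3, h4⟩ := hk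
    obtain ⟨α, hα⟩ := Int.eq_ofNat_of_zero_le h2
    obtain ⟨γ, hγ⟩ := Int.eq_ofNat_of_zero_le h3
    have hV := h α γ hα.symm hγ.symm
    have hsum : ∑ j ∈ Finset.range (α + 1),
          RatFunc.X ^ E (n₁ - j) * gaussCoeff α j * gaussCoeff γ (n₁ + k - j) =
        ∑ j ∈ Finset.range (n₁ + 1),
          RatFunc.X ^ E (n₁ - j) * gaussCoeff α j * gaussCoeff γ (n₁ + k - j) := by
      have key : ∀ M N : ℕ, (∀ j : ℕ, M ≤ j → (α : ℤ) < j ∨ n₁ + k - j < 0) → M ≤ N →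
          ∑ j ∈ Finset.range M,
            RatFunc.X ^ E (n₁ - j) * gaussCoeff α j * gaussCoeff γ (n₁ + k - j) =
          ∑ j ∈ Finset.range N,
            RatFunc.X ^ E (n₁ - j) * gaussCoeff α j * gaussCoeff γ (n₁ + k - j) := by
        intro M N hM hMN
        refine Finset.sum_subset (Finset.range_subset_range.mpr hMN) fun j _ hj => ?_
        rcases hM j (by simpa using hj) with hj | hj
        · rw [gaussCoeff_of_lt hj]; ring
        · rw [gaussCoeff_of_neg _ hj]; ring
      rw [key (α + 1) (α + n₁ + 1) (by intros; omega) (by omega),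
        key (n₁ + 1) (α + n₁ + 1) (by intros; omega) (by omega)]
    rw [hsum, ← Finset.sum_range_reflect] at hV
    have hterm : ∀ t ∈ Finset.range (n₁ + 1),
        RatFunc.X ^ E (n₁ - (n₁ + 1 - 1 - t : ℕ)) * gaussCoeff α (n₁ + 1 - 1 - t : ℕ) *
          gaussCoeff γ (n₁ + k - (n₁ + 1 - 1 - t : ℕ)) =
        qfact RatFunc.X α * qfact RatFunc.X γ *
          (RatFunc.X ^ E t * invQfact (n₁ - t) * invQfact (n₂ - t) *
          (invQfact (t + k) * invQfact (t + c - k))) := by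
      intro t ht
      have ht : t ≤ n₁ := Nat.lt_succ_iff.mp (Finset.mem_range.mp ht)
      rw [show ((n₁ + 1 - 1 - t : ℕ) : ℤ) = n₁ - t by omega, sub_sub_cancel]
      unfold gaussCoeff
      rw [← hα, ← hγ, show (n₁ : ℤ) + c - k - (n₁ - t) = t + c - k by ring,
        show (n₁ : ℤ) + k - (n₁ - t) = t + k by ring,
        show (n₂ : ℤ) + k - (t + k) = n₂ - t by ring]
      ring
    rw [Finset.sum_congr rfl hterm, ← Finset.mul_sum, gaussCoeff,
      show ((α + γ : ℕ) : ℤ) - (n₁ + k) = n₂ + c - k by push_cast; omega] at hV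
    have e1 := qfact_mul_invQfact α
    have e2 := qfact_mul_invQfact γ
    have e3 := qfact_mul_invQfact (α + γ)
    rw [show ((α + γ : ℕ) : ℤ) = n₁ + n₂ + c by push_cast; omega] at e3
    rw [← hα] at e1
    rw [← hγ] at e2
    generalize (∑ t ∈ Finset.range (n₁ + 1), _ : RatFunc ℚ) = T at hV ⊢
    calc _ = (qfact RatFunc.X (α + γ) * invQfact (n₁ + n₂ + c)) *
          (invQfact (n₁ + k) * invQfact (n₁ + c - k) *
            (invQfact (n₂ + k) * invQfact (n₂ + c - k))) := by rw [e3, one_mul]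
      _ = (qfact RatFunc.X (α + γ) * invQfact (n₁ + k) * invQfact (n₂ + c - k)) *
          (invQfact (n₁ + n₂ + c) * invQfact (n₁ + c - k) * invQfact (n₂ + k)) := by ring
      _ = (qfact RatFunc.X α * invQfact (n₁ + c - k)) * (qfact RatFunc.X γ * invQfact (n₂ + k)) *
          (invQfact (n₁ + n₂ + c) * T) := by rw [hV]; ring
      _ = _ := by rw [e1, e2]; ring
  · have hL : invQfact (n₁ + k) * invQfact (n₁ + c - k) *
        (invQfact (n₂ + k) * invQfact (n₂ + c - k)) = 0 := by
      by_contra hne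
      simp only [mul_eq_zero, not_or] at hne
      refine hk ⟨?_, ?_, ?_, ?_⟩ <;> by_contra hlt <;>
        simp [invQfact_of_neg (not_le.mp hlt)] at hne
    rw [hL, Finset.sum_eq_zero, mul_zero]
    intro t ht
    have ht : t ≤ n₁ := Nat.lt_succ_iff.mp (Finset.mem_range.mp ht)
    by_contra hne
    simp only [mul_eq_zero, not_or] at hne
    have key : ∀ z : ℤ, invQfact z ≠ 0 → 0 ≤ z := fun z hz => by
      by_contra hlt
      exact hz (invQfact_of_neg (not_le.mp hlt))
    have := key _ hne.1.2
    have := key _ hne.2.1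
    have := key _ hne.2.2
    omega

theorem merge_high {c : ℤ} (hc0 : 0 ≤ c) (hc1 : c ≤ 1) (n₁ n₂ : ℕ) (k : ℤ) :
    invQfact (n₁ + k) * invQfact (n₁ + c - k) * (invQfact (n₂ + k) * invQfact (n₂ + c - k)) =
      invQfact (n₁ + n₂ + c) * ∑ t ∈ Finset.range (n₁ + 1),
        RatFunc.X ^ ((n₁ - t : ℤ) * (n₂ - t)) * invQfact (n₁ - t) * invQfact (n₂ - t) *
          (invQfact (t + k) * invQfact (t + c - k)) := by
  refine merge_of_vandermonde (fun t => (n₁ - t : ℤ) * (n₂ - t)) hc0 hc1 n₁ n₂ k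
    fun α γ hα hγ => ?_
  rw [gaussCoeff_vandermonde]
  refine Finset.sum_congr rfl fun j _ => ?_
  rw [hγ]
  congr 3
  ring

theorem merge_low {c : ℤ} (hc0 : 0 ≤ c) (hc1 : c ≤ 1) (n₁ n₂ : ℕ) (k : ℤ) :
    RatFunc.X ^ (k * (k - c)) *
      (invQfact (n₁ + k) * invQfact (n₁ + c - k) * (invQfact (n₂ + k) * invQfact (n₂ + c - k))) =
      invQfact (n₁ + n₂ + c) * ∑ t ∈ Finset.range (n₁ + 1),
        RatFunc.X ^ ((t : ℤ) * (t + c)) * invQfact (n₁ - t) * invQfact (n₂ - t) *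
          (invQfact (t + k) * invQfact (t + c - k)) := by
  rw [merge_of_vandermonde (fun t => t * (t + c) - k * (k - c)) hc0 hc1 n₁ n₂ k
    fun α γ hα hγ => ?_]
  · rw [mul_left_comm, Finset.mul_sum]
    congr 1
    refine Finset.sum_congr rfl fun t _ => ?_
    simp only [← mul_assoc]
    rw [← X_zpow_add, add_sub_cancel]
  · rw [gaussCoeff_vandermonde']
    refine Finset.sum_congr rfl fun j _ => ?_
    rw [hα]
    congr 3
    ring

/-! ### An alternating sum of Gaussian coefficients -/

lemma triangle_add_one (k : ℤ) : (k + 1) * (k + 1 - 1) / 2 = k * (k - 1) / 2 + k := by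
  rw [show (k + 1) * (k + 1 - 1) = k * (k - 1) + k * 2 by ring,
    Int.add_mul_ediv_right _ _ two_ne_zero]

lemma triangle_neg (k : ℤ) : -k * (-k - 1) / 2 = k * (k - 1) / 2 + k := by
  rw [show -k * (-k - 1) = k * (k - 1) + k * 2 by ring, Int.add_mul_ediv_right _ _ two_ne_zero]

lemma two_mul_triangle (k : ℤ) : 2 * (k * (k - 1) / 2) = k * (k - 1) :=
  Int.two_mul_ediv_two_of_even (Int.even_mul_pred_self k)

lemma neg_one_zpow_succ (k : ℤ) : (-1 : RatFunc ℚ) ^ (k + 1) = -(-1) ^ k := by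
  rw [zpow_add₀ (by norm_num)]; simp

lemma neg_one_zpow_neg (k : ℤ) : (-1 : RatFunc ℚ) ^ (-k) = (-1) ^ k := by
  rw [zpow_neg, ← inv_zpow]; norm_num

/-- The summand of the alternating sum of Gaussian coefficients, shifted by `c`. -/
def altTerm (c : ℤ) (j : ℤ) : RatFunc ℚ :=
  (-1) ^ (j - c) * RatFunc.X ^ ((j - c) * (j - c - 1) / 2)

lemma altTerm_succ (c j : ℤ) :
    altTerm c (j + 1) = -(altTerm c j * RatFunc.X ^ (j - c)) := by
  rw [altTerm, altTerm, show j + 1 - c = (j - c) + 1 by ring, neg_one_zpow_succ, triangle_add_one,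
    X_zpow_add]
  ring

lemma sum_altTerm_succ (N : ℕ) (c : ℤ) :
    ∑ j ∈ Finset.range (N + 2), altTerm c j * gaussCoeff (N + 1) j =
      (1 - RatFunc.X ^ ((N : ℤ) - c)) *
        ∑ j ∈ Finset.range (N + 1), altTerm c j * gaussCoeff N j := by
  simp only [gaussCoeff_succ, mul_add, Finset.sum_add_distrib, sub_mul, one_mul]
  rw [sub_eq_add_neg]
  congr 1
  · rw [Finset.sum_range_succ, gaussCoeff_of_lt (by push_cast; omega), mul_zero, add_zero]
  · rw [Finset.sum_range_succ', gaussCoeff_of_neg N (by simp), mul_zero, mul_zero, add_zero,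
      Finset.mul_sum, ← Finset.sum_neg_distrib]
    refine Finset.sum_congr rfl fun j _ => ?_
    rw [Nat.cast_succ, altTerm_succ, add_sub_cancel_right,
      show (N : ℤ) - c = (j - c) + (N + 1 - (j + 1)) by ring, X_zpow_add]
    ring

lemma sum_altTerm_eq_zero {N c : ℕ} (h : c < N) :
    ∑ j ∈ Finset.range (N + 1), altTerm c j * gaussCoeff N j = 0 := by
  induction N, h using Nat.le_induction with
  | base => rw [sum_altTerm_succ]; simp
  | succ N _ ih => rw [sum_altTerm_succ, ih, mul_zero]

lemma sum_alternating {t K : ℕ} (hK : t ≤ K) :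
    ∑ k ∈ Finset.Icc (-(K : ℤ)) K, (-1 : RatFunc ℚ) ^ k * RatFunc.X ^ (k * (k - 1) / 2) *
      (invQfact (t + k) * invQfact (t - k)) = if t = 0 then 1 else 0 := by
  have hsub : Finset.Icc (-(t : ℤ)) t ⊆ Finset.Icc (-(K : ℤ)) K :=
    Finset.Icc_subset_Icc (by omega) (by omega)
  rw [← Finset.sum_subset hsub]
  · split_ifs with h
    · simp [h, invQfact_zero]
    · have hS := sum_altTerm_eq_zero (N := 2 * t) (c := t) (by omega)
      have hfac : qfact RatFunc.X (2 * t) * ∑ k ∈ Finset.Icc (-(t : ℤ)) t,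
          (-1 : RatFunc ℚ) ^ k * RatFunc.X ^ (k * (k - 1) / 2) *
            (invQfact (t + k) * invQfact (t - k)) = 0 := by
        rw [← hS, Finset.mul_sum]
        refine Finset.sum_bij' (fun k _ => (k + t).toNat) (fun j _ => (j : ℤ) - t) ?_ ?_ ?_ ?_ ?_
        · intro k hk; simp only [Finset.mem_Icc, Finset.mem_range] at *; omega
        · intro k hk; simp only [Finset.mem_Icc, Finset.mem_range] at *; omega
        · intro k hk; simp only [Finset.mem_Icc] at *; omega
        · intro k hk; simp
        · intro k hk
          simp only [Finset.mem_Icc] at hk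
          rw [Int.toNat_of_nonneg (by omega), altTerm, gaussCoeff, add_sub_cancel_right,
            show ((2 * t : ℕ) : ℤ) - (k + t) = t - k by push_cast; ring, add_comm k (t : ℤ)]
          ring
      exact (mul_eq_zero.mp hfac).resolve_left (qfact_X_ne_zero _)
  · intro k _ hk
    rcases not_and_or.mp (Finset.mem_Icc.not.mp hk) with hk | hk
    · rw [invQfact_of_neg (show (t : ℤ) + k < 0 by omega)]; ring
    · rw [invQfact_of_neg (show (t : ℤ) - k < 0 by omega)]; ring

/-! ### The normalized alternating sum -/

/-- The factor `∏ 1/([p+k]![p+c-k]!)` over the entries `p` of a list. -/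
def listFactor (c k : ℤ) (l : List ℕ) : RatFunc ℚ :=
  (l.map fun p : ℕ => invQfact (p + k) * invQfact (p + c - k)).prod

lemma listFactor_cons (c k : ℤ) (p : ℕ) (l : List ℕ) :
    listFactor c k (p :: l) = invQfact (p + k) * invQfact (p + c - k) * listFactor c k l := by
  simp [listFactor]

lemma listFactor_nil (c k : ℤ) : listFactor c k [] = 1 := by simp [listFactor]

/-- The alternating sum without its factorial prefactor, for `b + 1` in place of `b`. -/
def altSum (K a b : ℕ) (ms ns : List ℕ) : RatFunc ℚ :=
  ∑ k ∈ Finset.Icc (-(K : ℤ)) K, (-1 : RatFunc ℚ) ^ k *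
    RatFunc.X ^ ((a : ℤ) * k ^ 2 + (2 * (b + 1 : ℤ) - 1) * (k * (k - 1) / 2)) *
    listFactor 1 k ms * listFactor 0 k ns

/-- A family of functions on lists in which the first two entries can be merged,
either preserving or lowering the parameter. -/
structure Mergeable (c : ℕ) (Φ : ℕ → List ℕ → RatFunc ℚ) : Prop where
  high : ∀ b p p' l, Φ b (p :: p' :: l) = invQfact (p + p' + c) * ∑ t ∈ Finset.range (p + 1),
    RatFunc.X ^ ((p - t : ℤ) * (p' - t)) * invQfact (p - t) * invQfact (p' - t) * Φ b (t :: l)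
  low : ∀ b p p' l, Φ (b + 1) (p :: p' :: l) =
    invQfact (p + p' + c) * ∑ t ∈ Finset.range (p + 1),
      RatFunc.X ^ ((t : ℤ) * (t + c)) * invQfact (p - t) * invQfact (p' - t) * Φ b (t :: l)

lemma Mergeable.sum_listFactor {c : ℕ} (hc : c ≤ 1) (I : Finset ℤ) (f : ℕ → ℤ → RatFunc ℚ)
    (hf : ∀ b k, f (b + 1) k = f b k * RatFunc.X ^ (k * (k - c))) :
    Mergeable c fun b l => ∑ k ∈ I, f b k * listFactor c k l := by
  have hc0 : (0 : ℤ) ≤ c := by omega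
  have hc1 : (c : ℤ) ≤ 1 := by omega
  constructor <;> intro b p p' l
  · simp only [Finset.mul_sum]
    rw [Finset.sum_comm]
    refine Finset.sum_congr rfl fun k _ => ?_
    rw [listFactor_cons, listFactor_cons, ← mul_assoc (_ * _), merge_high hc0 hc1, Finset.mul_sum,
      Finset.sum_mul, Finset.mul_sum]
    refine Finset.sum_congr rfl fun t _ => ?_
    rw [listFactor_cons]
    ring
  · simp only [Finset.mul_sum]
    rw [Finset.sum_comm]
    refine Finset.sum_congr rfl fun k _ => ?_
    rw [listFactor_cons, listFactor_cons, ← mul_assoc (_ * _), hf, mul_assoc (f b k),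
      ← mul_assoc (RatFunc.X ^ _), merge_low hc0 hc1, Finset.mul_sum, Finset.sum_mul,
      Finset.mul_sum]
    refine Finset.sum_congr rfl fun t _ => ?_
    rw [listFactor_cons]
    ring

lemma Mergeable.const_mul {c : ℕ} {Φ : ℕ → List ℕ → RatFunc ℚ} (h : Mergeable c Φ)
    (z : RatFunc ℚ) : Mergeable c fun b l => z * Φ b l := by
  constructor <;> intro b p p' l
  · simp only [h.high, mul_left_comm z, Finset.mul_sum]
  · simp only [h.low, mul_left_comm z, Finset.mul_sum]

lemma mergeable_altSum_right (K b : ℕ) (ms : List ℕ) :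
    Mergeable 0 fun a ns => altSum K a b ms ns := by
  refine Mergeable.sum_listFactor zero_le_one _ _ fun a k => ?_
  rw [show (((a + 1 : ℕ) : ℤ) * k ^ 2 + (2 * (b + 1 : ℤ) - 1) * (k * (k - 1) / 2)) =
    ((a : ℤ) * k ^ 2 + (2 * (b + 1 : ℤ) - 1) * (k * (k - 1) / 2)) + k * (k - (0 : ℕ)) by
      push_cast; ring, X_zpow_add]
  ring

lemma mergeable_altSum_left (K a : ℕ) (ns : List ℕ) :
    Mergeable 1 fun b ms => altSum K a b ms ns := by
  simp only [altSum, mul_right_comm _ _ (listFactor 0 _ ns)]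
  refine Mergeable.sum_listFactor le_rfl _ _ fun b k => ?_
  rw [show ((a : ℤ) * k ^ 2 + (2 * (((b + 1 : ℕ) : ℤ) + 1) - 1) * (k * (k - 1) / 2)) =
    ((a : ℤ) * k ^ 2 + (2 * (b + 1 : ℤ) - 1) * (k * (k - 1) / 2)) + k * (k - (1 : ℕ)) by
      rw [Nat.cast_one]; push_cast; linear_combination two_mul_triangle k, X_zpow_add]
  ring

/-! ### Reduction to singletons -/

/-- The product `∏ [pᵢ + pᵢ₊₁ + c]!` along a list, closed off with `[p + e]!` for the last `p`. -/
def chainFact (c e : ℕ) : List ℕ → RatFunc ℚ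
  | [] => 1
  | [p] => qfact RatFunc.X (p + e)
  | p :: p' :: l => qfact RatFunc.X (p + p' + c) * chainFact c e (p' :: l)

lemma exists_chainFact_cons (c e : ℕ) (l : List ℕ) :
    ∃ (h : ℕ) (R : RatFunc ℚ), ∀ p, chainFact c e (p :: l) = qfact RatFunc.X (p + h) * R := by
  cases l with
  | nil => exact ⟨e, 1, fun p => (mul_one _).symm⟩
  | cons p' l => exact ⟨p' + c, chainFact c e (p' :: l), fun p => by rw [chainFact, add_assoc]⟩

lemma merge_coeff_eq (p p' t h : ℕ) :
    qfact RatFunc.X p * qfact RatFunc.X (p' + h) * (invQfact (p - t) * invQfact (p' - t)) =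
      gaussCoeff p t * gaussCoeff (p' + h) (p' - t) *
        (qfact RatFunc.X t * qfact RatFunc.X (t + h)) := by
  have h1 := qfact_mul_invQfact t
  have h2 := qfact_mul_invQfact (t + h)
  rw [gaussCoeff, gaussCoeff,
    show ((p' + h : ℕ) : ℤ) - (p' - t) = (t + h : ℕ) by push_cast; ring]
  linear_combination (-qfact RatFunc.X p * qfact RatFunc.X (p' + h) *
    (invQfact (p - t) * invQfact (p' - t))) * (h2 + h1 * (qfact RatFunc.X (t + h) *
      invQfact (t + h : ℕ)))

theorem Mergeable.isNonnegPoly {c e d K : ℕ} {Φ : ℕ → List ℕ → RatFunc ℚ} (hΦ : Mergeable c Φ)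
    (base : ∀ b ≤ d, ∀ p ≤ K,
      IsNonnegPoly (qfact RatFunc.X p * qfact RatFunc.X (p + e) * Φ b [p]))
    (l : List ℕ) : ∀ p ≤ K, ∀ b ≤ d + l.length,
      IsNonnegPoly (qfact RatFunc.X p * chainFact c e (p :: l) * Φ b (p :: l)) := by
  induction l with
  | nil => exact fun p hp b hb => base b hb p hp
  | cons p' l ih =>
    intro p hp b hb
    obtain ⟨h, R, hR⟩ := exists_chainFact_cons c e l
    have reduce : ∀ (E : ℕ → ℤ) (b' : ℕ), b' ≤ d + l.length →
        (∀ t : ℕ, t ≤ p → t ≤ p' → 0 ≤ E t) →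
        Φ b (p :: p' :: l) = invQfact (p + p' + c) * ∑ t ∈ Finset.range (p + 1),
          RatFunc.X ^ E t * invQfact (p - t) * invQfact (p' - t) * Φ b' (t :: l) →
        IsNonnegPoly
          (qfact RatFunc.X p * chainFact c e (p :: p' :: l) * Φ b (p :: p' :: l)) := by
      intro E b' hb' hE hrec
      have hcancel := qfact_mul_invQfact (p + p' + c)
      push_cast at hcancel
      have hexp : qfact RatFunc.X p * chainFact c e (p :: p' :: l) * Φ b (p :: p' :: l) =
          ∑ t ∈ Finset.range (p + 1), RatFunc.X ^ E t *
            (gaussCoeff p t * gaussCoeff (p' + h) (p' - t)) *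
            (qfact RatFunc.X t * chainFact c e (t :: l) * Φ b' (t :: l)) := by
        calc _ = (qfact RatFunc.X (p + p' + c) * invQfact (p + p' + c)) *
              ∑ t ∈ Finset.range (p + 1), RatFunc.X ^ E t * R * Φ b' (t :: l) *
                (qfact RatFunc.X p * qfact RatFunc.X (p' + h) *
                  (invQfact (p - t) * invQfact (p' - t))) := by
              simp only [hrec, chainFact, hR, Finset.mul_sum]
              exact Finset.sum_congr rfl fun t _ => by ring
          _ = _ := by
              rw [hcancel, one_mul]
              refine Finset.sum_congr rfl fun t _ => ?_
              rw [merge_coeff_eq, hR]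
              ring
      rw [hexp]
      refine IsNonnegPoly.sum fun t ht => ?_
      have ht : t ≤ p := Nat.lt_succ_iff.mp (Finset.mem_range.mp ht)
      rcases lt_or_ge p' t with htp | htp
      · rw [gaussCoeff_of_neg (p' + h) (by omega)]
        simpa using IsNonnegPoly.zero
      · exact ((IsNonnegPoly.X_zpow (hE t ht htp)).mul
          ((isNonnegPoly_gaussCoeff _ _).mul (isNonnegPoly_gaussCoeff _ _))).mul
          (ih t (ht.trans hp) b' hb')
    by_cases hb' : b ≤ d + l.length
    · exact reduce _ b hb'
        (fun t h1 h2 => mul_nonneg (by omega) (by omega)) (hΦ.high b p p' l)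
    · obtain ⟨b, rfl⟩ : ∃ b', b = b' + 1 := ⟨b - 1, by omega⟩
      rw [List.length_cons] at hb
      exact reduce _ b (by omega) (fun t _ _ => by positivity) (hΦ.low b p p' l)

/-! ### The singleton case -/

lemma sum_Icc_neg_congr {K : ℕ} {f g : ℤ → RatFunc ℚ}
    (h : ∀ k, f k + f (-k) = g k + g (-k)) :
    ∑ k ∈ Finset.Icc (-(K : ℤ)) K, f k = ∑ k ∈ Finset.Icc (-(K : ℤ)) K, g k := by
  have hrefl : ∀ u : ℤ → RatFunc ℚ,
      2 * ∑ k ∈ Finset.Icc (-(K : ℤ)) K, u k =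
        ∑ k ∈ Finset.Icc (-(K : ℤ)) K, (u k + u (-k)) := by
    intro u
    rw [two_mul, Finset.sum_add_distrib]
    congr 1
    exact Finset.sum_nbij' (fun k => -k) (fun k => -k)
      (by intro k; simp only [Finset.mem_Icc]; omega)
      (by intro k; simp only [Finset.mem_Icc]; omega) (by simp) (by simp) (by simp)
  apply mul_left_cancel₀ (two_ne_zero (α := RatFunc ℚ))
  rw [hrefl, hrefl]
  exact Finset.sum_congr rfl fun k _ => h k

lemma altSum_singleton_eq (K a m n : ℕ) :
    altSum K a 0 [m] [n] = zqint (m + 1) * ∑ k ∈ Finset.Icc (-(K : ℤ)) K, (-1 : RatFunc ℚ) ^ k *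
      RatFunc.X ^ ((a : ℤ) * k ^ 2 + k * (k - 1) / 2) * listFactor 0 k [n, m + 1] := by
  rw [altSum, Finset.mul_sum]
  refine sum_Icc_neg_congr fun k => ?_
  have h1 := zqint_add k (m + 1 - k)
  have h2 := zqint_add k (m + 1)
  rw [add_sub_cancel] at h1
  simp only [listFactor_cons, listFactor_nil, triangle_neg, neg_one_zpow_neg, Nat.cast_zero,
    zero_add, mul_one, neg_sq, add_zero, sub_neg_eq_add, ← sub_eq_add_neg, Nat.cast_succ,
    show (2 - 1 : ℤ) = 1 by norm_num, one_mul]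
  rw [invQfact_eq (m + k), invQfact_eq (m - k), show (m : ℤ) + k + 1 = k + (m + 1) by ring,
    show (m : ℤ) - k + 1 = m + 1 - k by ring, show (m : ℤ) + 1 + k = k + (m + 1) by ring,
    ← add_assoc (_ * _), X_zpow_add _ k]
  linear_combination ((-1) ^ k * RatFunc.X ^ ((a : ℤ) * k ^ 2 + k * (k - 1) / 2) *
    invQfact (k + (m + 1)) * invQfact (m + 1 - k) * invQfact (n + k) * invQfact (n - k)) *
      (h2 - h1)

lemma isNonnegPoly_altSum_singleton {K n : ℕ} (hn : n ≤ K) (m : ℕ) {a : ℕ} (ha : a ≤ 1) :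
    IsNonnegPoly (qfact RatFunc.X n * qfact RatFunc.X (n + (m + 1)) *
      (qfact RatFunc.X m * altSum K a 0 [m] [n])) := by
  have hM : Mergeable 0 fun a l => ∑ k ∈ Finset.Icc (-(K : ℤ)) K, (-1 : RatFunc ℚ) ^ k *
      RatFunc.X ^ ((a : ℤ) * k ^ 2 + k * (k - 1) / 2) * listFactor 0 k l := by
    refine Mergeable.sum_listFactor zero_le_one _ _ fun a k => ?_
    rw [show (((a + 1 : ℕ) : ℤ) * k ^ 2 + k * (k - 1) / 2) =
      ((a : ℤ) * k ^ 2 + k * (k - 1) / 2) + k * (k - (0 : ℕ)) by push_cast; ring, X_zpow_add]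
    ring
  have hdelta : ∀ E : ℕ → ℤ, invQfact (n + (m + 1 : ℕ) + (0 : ℕ)) *
      ∑ t ∈ Finset.range (n + 1), RatFunc.X ^ E t * invQfact (n - t) *
        invQfact ((m + 1 : ℕ) - t) *
        ∑ k ∈ Finset.Icc (-(K : ℤ)) K, (-1 : RatFunc ℚ) ^ k *
          RatFunc.X ^ (((0 : ℕ) : ℤ) * k ^ 2 + k * (k - 1) / 2) * listFactor 0 k [t] =
      RatFunc.X ^ E 0 * invQfact (n + (m + 1) : ℕ) * invQfact n * invQfact (m + 1 : ℕ) := by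
    intro E
    rw [Finset.sum_eq_single_of_mem 0 (by simp)]
    · have h0 := sum_alternating (t := 0) K.zero_le
      simp only [listFactor_cons, listFactor_nil, mul_one, Nat.cast_zero, zero_mul, zero_add,
        add_zero, sub_zero, if_true] at h0 ⊢
      rw [h0]
      push_cast
      ring
    · intro t ht ht0
      have h0 := sum_alternating (t := t) (K := K)
        ((Nat.lt_succ_iff.mp (Finset.mem_range.mp ht)).trans hn)
      simp only [listFactor_cons, listFactor_nil, mul_one, Nat.cast_zero, zero_mul, zero_add,
        add_zero, if_neg ht0] at h0 ⊢
      rw [h0, mul_zero]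
  have hfin : ∀ z : RatFunc ℚ, qfact RatFunc.X n * qfact RatFunc.X (n + (m + 1)) *
      (qfact RatFunc.X m * (zqint (m + 1) *
        (z * invQfact (n + (m + 1) : ℕ) * invQfact n * invQfact (m + 1 : ℕ)))) = z := by
    intro z
    have h1 := qfact_mul_invQfact n
    have h2 := qfact_mul_invQfact (n + (m + 1))
    have h3 := qfact_mul_invQfact m
    rw [invQfact_eq, ← Nat.cast_succ] at h3
    calc _ = (qfact RatFunc.X n * invQfact n) *
          (qfact RatFunc.X (n + (m + 1)) * invQfact (n + (m + 1) : ℕ)) *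
          (qfact RatFunc.X m * (zqint (m + 1 : ℕ) * invQfact (m + 1 : ℕ))) * z := by
            push_cast; ring
      _ = z := by rw [h1, h2, h3]; ring
  rw [altSum_singleton_eq]
  interval_cases a
  · rw [hM.high, hdelta, hfin]
    exact .X_zpow (mul_nonneg (by simp) (by push_cast; omega))
  · rw [hM.low 0, hdelta, hfin]
    exact .X_zpow (by simp)

/-! ### Cyclic products -/

lemma prod_range_cyclic (f : ℕ → RatFunc ℚ) (r : ℕ) :
    ∏ i ∈ Finset.range (r + 1), f ((i + 1) % (r + 1)) = ∏ i ∈ Finset.range (r + 1), f i := by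
  rw [Finset.prod_range_succ, Finset.prod_range_succ', Nat.mod_self]
  congr 1
  refine Finset.prod_congr rfl fun i hi => ?_
  rw [Nat.mod_eq_of_lt (by simpa using hi)]

lemma listFactor_map_range (c k : ℤ) (m : ℕ → ℕ) (r : ℕ) :
    listFactor c k ((List.range r).map m) =
      ∏ i ∈ Finset.range r, (invQfact (m i + k) * invQfact (m i + c - k)) := by
  rw [listFactor, List.map_map, Finset.prod_eq_multiset_prod, Finset.range_val, Multiset.range,
    Multiset.map_coe, Multiset.prod_coe]
  rfl

lemma prod_qbinom_cyclic (c r : ℕ) (m : ℕ → ℕ) (k : ℤ) :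
    ∏ i ∈ Finset.range (r + 1),
        qbinom RatFunc.X ((m i : ℤ) + (m ((i + 1) % (r + 1)) : ℤ) + c) ((m i : ℤ) + k) =
      (∏ i ∈ Finset.range r, qfact RatFunc.X (m i + m (i + 1) + c)) *
        qfact RatFunc.X (m 0 + m r + c) * listFactor c k ((List.range (r + 1)).map m) := by
  have h : ∀ i, qbinom RatFunc.X ((m i : ℤ) + (m ((i + 1) % (r + 1)) : ℤ) + c) ((m i : ℤ) + k) =
      qfact RatFunc.X (m i + m ((i + 1) % (r + 1)) + c) *
        (invQfact (m i + k) * invQfact (m ((i + 1) % (r + 1)) + c - k)) := by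
    intro i
    have := qbinom_eq_gaussCoeff (m i + m ((i + 1) % (r + 1)) + c) (m i + k)
    push_cast at this
    rw [this, gaussCoeff, mul_assoc]
    congr 3
    push_cast
    ring
  simp only [h, Finset.prod_mul_distrib, listFactor_map_range]
  rw [prod_range_cyclic fun i => invQfact (m i + c - k)]
  congr 1
  rw [Finset.prod_range_succ, Nat.mod_self, add_comm (m r)]
  congr 1
  refine Finset.prod_congr rfl fun i hi => ?_
  rw [Nat.mod_eq_of_lt (by simpa using hi)]

lemma map_range_succ (m : ℕ → ℕ) (r : ℕ) :
    (List.range (r + 1)).map m = m 0 :: (List.range r).map fun i => m (i + 1) := by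
  rw [List.range_succ_eq_map, List.map_cons, List.map_map]
  rfl

lemma chainFact_map_range (c e : ℕ) (m : ℕ → ℕ) (r : ℕ) :
    chainFact c e ((List.range (r + 1)).map m) =
      (∏ i ∈ Finset.range r, qfact RatFunc.X (m i + m (i + 1) + c)) *
        qfact RatFunc.X (m r + e) := by
  induction r generalizing m with
  | zero => simp [chainFact]
  | succ r ih =>
    have h := ih fun i => m (i + 1)
    rw [map_range_succ, map_range_succ, chainFact, ← map_range_succ fun i => m (i + 1), h,
      Finset.prod_range_succ']
    ring

lemma F_eq_altSum (r s a b : ℕ) (m n : ℕ → ℕ) :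
    F (r + 1) (s + 1) a (b + 1) m n RatFunc.X =
      qfact RatFunc.X (m 0) * chainFact 1 (n s + 1) ((List.range (r + 1)).map m) *
        (qfact RatFunc.X (n 0) * (∏ j ∈ Finset.range s, qfact RatFunc.X (n j + n (j + 1) + 0)) *
          altSum (n 0) a b ((List.range (r + 1)).map m) ((List.range (s + 1)).map n)) := by
  have hm := fun k => prod_qbinom_cyclic 1 r m k
  have hn := fun k => prod_qbinom_cyclic 0 s n k
  simp only [Nat.cast_one, Nat.cast_zero, add_zero] at hm hn
  have h1 := qfact_X_ne_zero (m 0 + m r + 1)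
  have h2 := qfact_X_ne_zero (n 0 + n s)
  rw [F, chainFact_map_range, altSum]
  simp only [hm, hn, add_tsub_cancel_right, Finset.mul_sum, add_zero]
  refine Finset.sum_congr rfl fun k _ => ?_
  rw [show m r + (n s + 1) = m r + n s + 1 by ring]
  push_cast
  field_simp

/-- For `r, s > 1`, nonnegative integers `m_1, …, m_r` and positive integers
`n_1, …, n_s` (with cyclic conventions), `0 ≤ a ≤ s` and `1 ≤ b ≤ r`,
the alternating sum `F_{r,s}^{(b)}(m; n; a; q)` is a polynomial in `q`
with nonnegative integer coefficients. -/
theorem F_isNonnegPoly_of_nonneg (r s : ℕ) (hr : 1 < r) (hs : 1 < s) (m n : ℕ → ℕ)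
    (hn : ∀ j < s, 0 < n j)
    (a b : ℕ) (ha : a ≤ s) (hb1 : 1 ≤ b) (hbr : b ≤ r) :
    IsNonnegPoly (F r s a b m n RatFunc.X) := by
  obtain ⟨r, rfl⟩ : ∃ r', r = r' + 1 := ⟨r - 1, by omega⟩
  obtain ⟨s, rfl⟩ : ∃ s', s = s' + 1 := ⟨s - 1, by omega⟩
  obtain ⟨b, rfl⟩ : ∃ b', b = b' + 1 := ⟨b - 1, by omega⟩
  rw [F_eq_altSum, map_range_succ m]
  refine Mergeable.isNonnegPoly (d := 0) (K := m 0)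
    ((mergeable_altSum_left (n 0) a ((List.range (s + 1)).map n)).const_mul _)
    (fun b hb p _ => ?_) _ _ le_rfl _ (by simpa using hbr)
  obtain rfl : b = 0 := by omega
  have key := Mergeable.isNonnegPoly (d := 1) (K := n 0) (e := p + 1)
    ((mergeable_altSum_right (n 0) 0 [p]).const_mul (qfact RatFunc.X p))
    (fun a ha t ht => isNonnegPoly_altSum_singleton ht p ha)
    ((List.range s).map fun i => n (i + 1)) (n 0) le_rfl a (by simpa [add_comm] using ha)
  rw [← map_range_succ, chainFact_map_range, show n s + (p + 1) = p + (n s + 1) by ring] at key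
  convert key using 1
  ring

end
end

section
/- Let r, s > 1, let m_1, ..., m_r be nonnegative integers and n_1, ..., n_s positive integers with cyclic conventions m_{r+1} = m_1 and n_{s+1} = n_1, and let 0 ≤ a ≤ s and 1 ≤ b ≤ r. If F_{r,s}^{(r-b+1)}(m; n; s-a; q) is a polynomial in q, then its degree is at most Δ(m;n) = C(m_1,2) + C(n_1,2) + C(m_r+n_s+1,2) - C(m_1+m_r+1,2) - C(n_1+n_s,2) + Σ_{i=1}^{r} m_i(m_{i+1}+1) + Σ_{j=1}^{s} n_j n_{j+1}, where C(N,2) = N(N-1)/2. -/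
open Finset

noncomputable section

/-- The exponent `Δ(m;n)` from the reciprocity lemma:
`Δ = C(m_1,2) + C(n_1,2) + C(m_r+n_s+1,2) - C(m_1+m_r+1,2) - C(n_1+n_s,2)
   + Σ_{i=1}^{r} m_i(m_{i+1}+1) + Σ_{j=1}^{s} n_j n_{j+1}`. -/
def delta (r s : ℕ) (m n : ℕ → ℕ) : ℤ :=
  ((m 0).choose 2 : ℤ) + ((n 0).choose 2 : ℤ) +
      ((m (r - 1) + n (s - 1) + 1).choose 2 : ℤ) -
    ((m 0 + m (r - 1) + 1).choose 2 : ℤ) - ((n 0 + n (s - 1)).choose 2 : ℤ) +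
    ∑ i ∈ Finset.range r, (m i : ℤ) * ((m ((i + 1) % r) : ℤ) + 1) +
    ∑ j ∈ Finset.range s, (n j : ℤ) * (n ((j + 1) % s) : ℤ)

open WithZero in
/-- A valuation with `v x = exp 1` gives the `q`-integer `[n + 1]` the value `exp n`. -/
theorem valuation_qint_succ (v : Valuation (RatFunc ℚ) ℤᵐ⁰) {x : RatFunc ℚ} (hx : v x = exp 1)
    (n : ℕ) : v (qint x (n + 1)) = exp (n : ℤ) := by
  have h : ∀ k : ℕ, v (1 - x ^ (k + 1)) = exp ((k : ℤ) + 1) := by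
    intro k
    have hk : v (x ^ (k + 1)) = exp ((k : ℤ) + 1) := by
      rw [map_pow, hx, ← exp_nsmul]
      simp
    rw [Valuation.map_sub_eq_of_lt_right, hk]
    rw [hk, map_one, ← exp_zero, exp_lt_exp]
    positivity
  have h0 : v (1 - x) = exp 1 := by simpa using h 0
  rw [qint, map_div₀, h, h0, ← exp_sub, add_sub_cancel_right]

open WithZero in
theorem valuation_qfact (v : Valuation (RatFunc ℚ) ℤᵐ⁰) {x : RatFunc ℚ} (hx : v x = exp 1)
    (n : ℕ) : v (qfact x n) = exp (n.choose 2 : ℤ) := by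
  induction n with
  | zero => simp [qfact]
  | succ n ih =>
    rw [qfact, Finset.prod_range_succ, ← qfact, map_mul, ih, valuation_qint_succ v hx, ← exp_add,
      Nat.choose_succ_succ' n 1, Nat.choose_one_right, Nat.cast_add, add_comm]

theorem choose_two_add (k l : ℕ) :
    (k + l).choose 2 = k.choose 2 + l.choose 2 + k * l := by
  induction l with
  | zero => simp
  | succ l ih =>
    rw [← add_assoc, Nat.choose_succ_succ' (k + l) 1, Nat.choose_succ_succ' l 1, ih,
      Nat.choose_one_right, Nat.choose_one_right]
    ring

open WithZero in
theorem valuation_qbinom_le (v : Valuation (RatFunc ℚ) ℤᵐ⁰) {x : RatFunc ℚ} (hx : v x = exp 1)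
    (N K : ℤ) : v (qbinom x N K) ≤ exp (K * (N - K)) := by
  rw [qbinom]
  split_ifs with h
  · obtain ⟨k, rfl⟩ := Int.eq_ofNat_of_zero_le h.1
    obtain ⟨l, hl⟩ := Int.eq_ofNat_of_zero_le (sub_nonneg.2 h.2)
    obtain rfl : N = ((k + l : ℕ) : ℤ) := by push_cast; linarith
    rw [hl]
    simp only [Int.toNat_natCast, map_div₀, map_mul, valuation_qfact v hx, ← exp_add, ← exp_sub,
      exp_le_exp, choose_two_add]
    push_cast
    linarith
  · simp

theorem sum_range_cyclic_succ {M : Type*} [AddCommMonoid M] (f : ℕ → M) (r : ℕ) :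
    ∑ i ∈ Finset.range r, f ((i + 1) % r) = ∑ i ∈ Finset.range r, f i := by
  cases r with
  | zero => simp
  | succ t =>
    rw [Finset.sum_range_succ, Finset.sum_range_succ' f, Nat.mod_self]
    congr 1
    refine Finset.sum_congr rfl fun i hi ↦ ?_
    rw [Nat.mod_eq_of_lt (by simpa using hi)]

open WithZero in
theorem prod_le_exp_sum {ι : Type*} (s : Finset ι) (f : ι → ℤᵐ⁰) (d : ι → ℤ)
    (h : ∀ i ∈ s, f i ≤ exp (d i)) : ∏ i ∈ s, f i ≤ exp (∑ i ∈ s, d i) := by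
  classical
  induction s using Finset.induction_on with
  | empty => simp
  | insert i s hi ih =>
    rw [Finset.prod_insert hi, Finset.sum_insert hi, exp_add]
    exact mul_le_mul' (h i (Finset.mem_insert_self i s))
      (ih fun j hj ↦ h j (Finset.mem_insert_of_mem hj))

/-- The shift by `k` changes a cyclic sum of products `u_i (u_{i+1} + c)` by `r k (c - k)`. -/
theorem sum_cyclic_shift (u : ℕ → ℕ) (r : ℕ) (c k : ℤ) :
    ∑ i ∈ Finset.range r, ((u i : ℤ) + k) * ((u ((i + 1) % r) : ℤ) + c - k) =
      ∑ i ∈ Finset.range r, (u i : ℤ) * ((u ((i + 1) % r) : ℤ) + c) + r * (k * (c - k)) := by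
  have h := sum_range_cyclic_succ (fun i ↦ (u i : ℤ)) r
  have hterm : ∀ i, ((u i : ℤ) + k) * ((u ((i + 1) % r) : ℤ) + c - k) =
      (u i : ℤ) * ((u ((i + 1) % r) : ℤ) + c) + k * (u ((i + 1) % r) : ℤ) - k * (u i : ℤ) +
        k * (c - k) := fun i ↦ by ring
  simp only [hterm, Finset.sum_add_distrib, Finset.sum_sub_distrib, ← Finset.mul_sum, h,
    Finset.sum_const, Finset.card_range, nsmul_eq_mul]
  ring

open WithZero in
/-- Every summand of `F` at the reflected parameters has degree at most that of its products of
Gaussian coefficients at `k = 0`. -/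
theorem valuation_F_term_le (v : Valuation (RatFunc ℚ) ℤᵐ⁰) {x : RatFunc ℚ} (hx : v x = exp 1)
    (r s a b : ℕ) (m n : ℕ → ℕ) (ha : a ≤ s) (hb1 : 1 ≤ b) (hbr : b ≤ r) (k : ℤ) :
    v ((-1 : RatFunc ℚ) ^ k *
        x ^ (((s - a : ℕ) : ℤ) * k ^ 2 + (2 * ((r - b + 1 : ℕ) : ℤ) - 1) * (k * (k - 1) / 2)) *
        (∏ i ∈ Finset.range r,
          qbinom x ((m i : ℤ) + (m ((i + 1) % r) : ℤ) + 1) ((m i : ℤ) + k)) *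
        (∏ j ∈ Finset.range s,
          qbinom x ((n j : ℤ) + (n ((j + 1) % s) : ℤ)) ((n j : ℤ) + k))) ≤
      exp (∑ i ∈ Finset.range r, (m i : ℤ) * ((m ((i + 1) % r) : ℤ) + 1) +
        ∑ j ∈ Finset.range s, (n j : ℤ) * (n ((j + 1) % s) : ℤ)) := by
  have hm := prod_le_exp_sum (Finset.range r) _ _ fun i _ ↦
    valuation_qbinom_le v hx ((m i : ℤ) + (m ((i + 1) % r) : ℤ) + 1) ((m i : ℤ) + k)
  have hn := prod_le_exp_sum (Finset.range s) _ _ fun j _ ↦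
    valuation_qbinom_le v hx ((n j : ℤ) + (n ((j + 1) % s) : ℤ)) ((n j : ℤ) + k)
  have hM := sum_cyclic_shift m r 1 k
  have hN := sum_cyclic_shift n s 0 k
  simp only [add_zero] at hN
  rw [Finset.sum_congr rfl fun i _ ↦ show _ = ((m i : ℤ) + k) * ((m ((i + 1) % r) : ℤ) + 1 - k) by
    ring, hM] at hm
  rw [Finset.sum_congr rfl fun j _ ↦ show _ = ((n j : ℤ) + k) * ((n ((j + 1) % s) : ℤ) - k) by
    ring, hN] at hn
  rw [map_mul, map_mul, map_mul, map_prod, map_prod, map_zpow₀, map_zpow₀, Valuation.map_neg,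
    map_one, one_zpow, one_mul, hx, ← exp_zsmul]
  refine (mul_le_mul' (mul_le_mul' le_rfl hm) hn).trans ?_
  rw [← exp_add, ← exp_add, exp_le_exp]
  obtain ⟨t, ht⟩ : ∃ t, k * (k - 1) = 2 * t := by
    obtain ⟨t, ht⟩ := Int.even_mul_pred_self k
    exact ⟨t, by rw [ht, two_mul]⟩
  have ht0 : 0 ≤ t := by
    rcases le_or_gt k 0 with hk | hk <;> nlinarith
  rw [ht, Int.mul_ediv_cancel_left _ two_ne_zero]
  push_cast [Nat.cast_sub ha, Nat.cast_sub hbr]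
  have hb : 0 ≤ ((b : ℤ) - 1) * t := mul_nonneg (by lia) ht0
  have haa : 0 ≤ (a : ℤ) * k ^ 2 := by positivity
  have hk1 : k * (1 - k) = -(2 * t) := by rw [← ht]; ring
  rw [hk1]
  simp only [smul_eq_mul]
  nlinarith

/-- Degree bound: for `r, s > 1`, nonnegative `m_i`, positive `n_j`,
`0 ≤ a ≤ s` and `1 ≤ b ≤ r`, if `F_{r,s}^{(r-b+1)}(m; n; s-a; q)` is a
polynomial in `q`, then its degree is at most `Δ(m;n)`. -/
theorem F_degree_le (r s : ℕ) (hr : 1 < r) (hs : 1 < s) (m n : ℕ → ℕ)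
    (hn : ∀ j < s, 0 < n j) (a b : ℕ) (ha : a ≤ s) (hb1 : 1 ≤ b) (hbr : b ≤ r)
    (p : Polynomial ℚ)
    (hp : F r s (s - a) (r - b + 1) m n RatFunc.X =
      algebraMap (Polynomial ℚ) (RatFunc ℚ) p) (hp0 : p ≠ 0) :
    (p.natDegree : ℤ) ≤ delta r s m n := by
  classical
  have hx := RatFunc.inftyValuation.X ℚ
  have hpv : RatFunc.inftyValuation ℚ (algebraMap (Polynomial ℚ) (RatFunc ℚ) p) =
      WithZero.exp (p.natDegree : ℤ) := RatFunc.inftyValuation.polynomial ℚ hp0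
  have hsum := Valuation.map_sum_le (RatFunc.inftyValuation ℚ)
    (s := Finset.Icc (-(n 0 : ℤ)) (n 0 : ℤ)) fun k _ ↦
      valuation_F_term_le (RatFunc.inftyValuation ℚ) hx r s a b m n ha hb1 hbr k
  rw [← WithZero.exp_le_exp, ← hpv, ← hp, F, map_mul]
  refine (mul_le_mul' le_rfl hsum).trans ?_
  simp only [map_div₀, map_mul, valuation_qfact _ hx, ← WithZero.exp_add, ← WithZero.exp_sub,
    WithZero.exp_le_exp, delta]
  linarith

end
end

section
/- Let r ≥ 3 and s > 1, let m_1, ..., m_r be nonnegative integers and n_1, ..., n_s positive integers with cyclic conventions m_{r+1} = m_1 and n_{s+1} = n_1, and let 0 ≤ a ≤ s and 2 ≤ b ≤ r. Then F_{r,s}^{(b)}(m_1, m_2, ..., m_r; n; a; q) = Σ_{ℓ=0}^{m_1} q^{ℓ^2 + ℓ} · [m_1 choose ℓ] · [m_2+m_3+1 choose m_2-ℓ] · F_{r-1,s}^{(b-1)}(ℓ, m_3, ..., m_r; n; a; q). -/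
open Finset

noncomputable section

/-- Reciprocal `q`-factorial `1/[z]!`, extended by zero to negative integers. -/
def qfactInv (x : RatFunc ℚ) (z : ℤ) : RatFunc ℚ :=
  if 0 ≤ z then (qfact x z.toNat)⁻¹ else 0

/-- The `q`-integer `[z]` for an integer `z`. -/
def qintZ (x : RatFunc ℚ) (z : ℤ) : RatFunc ℚ := (1 - x ^ z) / (1 - x)

lemma qfactInv_of_neg (x : RatFunc ℚ) {z : ℤ} (hz : z < 0) : qfactInv x z = 0 :=
  if_neg (not_le.mpr hz)

lemma qfactInv_zero (x : RatFunc ℚ) : qfactInv x 0 = 1 := by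
  simp [qfactInv, qfact]

lemma qint_X_ne_zero {n : ℕ} (hn : n ≠ 0) : qint RatFunc.X n ≠ 0 := by
  have key : ∀ j : ℕ, j ≠ 0 → (1 - RatFunc.X ^ j : RatFunc ℚ) ≠ 0 := by
    intro j hj h
    have h' : (RatFunc.X : RatFunc ℚ) ^ j = 1 := (sub_eq_zero.mp h).symm
    rw [← RatFunc.algebraMap_X, ← map_pow, ← map_one (algebraMap (Polynomial ℚ) (RatFunc ℚ))] at h'
    have h2 := congrArg Polynomial.natDegree (RatFunc.algebraMap_injective ℚ h')
    simp only [Polynomial.natDegree_X_pow, Polynomial.natDegree_one] at h2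
    exact hj h2
  exact div_ne_zero (key n hn) (by simpa using key 1 one_ne_zero)

lemma qfact_mul_qfactInv (n : ℕ) : qfact RatFunc.X n * qfactInv RatFunc.X n = 1 := by
  simp [qfactInv, qfact_X_ne_zero]

lemma qintZ_mul_qfactInv (z : ℤ) :
    qintZ RatFunc.X z * qfactInv RatFunc.X z = qfactInv RatFunc.X (z - 1) := by
  rcases lt_trichotomy z 0 with hz | rfl | hz
  · rw [qfactInv_of_neg _ hz, qfactInv_of_neg _ (by omega), mul_zero]
  · rw [qfactInv_of_neg _ (show (0 : ℤ) - 1 < 0 by norm_num)]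
    simp [qintZ]
  · obtain ⟨n, rfl⟩ : ∃ n : ℕ, z = n + 1 := ⟨(z - 1).toNat, by omega⟩
    have h1 : qintZ RatFunc.X ((n : ℤ) + 1) = qint RatFunc.X (n + 1) := by
      simp only [qintZ, qint]; norm_cast
    have h2 : ((n : ℤ) + 1).toNat = n + 1 := by omega
    have h3 := qfact_X_ne_zero n
    have h4 := qint_X_ne_zero n.succ_ne_zero
    have h5 : qfact RatFunc.X (n + 1) = qfact RatFunc.X n * qint RatFunc.X (n + 1) :=
      Finset.prod_range_succ _ _
    rw [qfactInv, qfactInv, if_pos (by omega), if_pos (by omega), h1, h2, add_sub_cancel_right,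
      Int.toNat_natCast, h5, mul_inv, mul_left_comm, mul_inv_cancel₀ h4, mul_one]

lemma qfact_toNat_of_pos (x : RatFunc ℚ) {z : ℤ} (hz : 0 < z) :
    qfact x z.toNat = qintZ x z * qfact x (z - 1).toNat := by
  obtain ⟨n, rfl⟩ : ∃ n : ℕ, z = n + 1 := ⟨(z - 1).toNat, by omega⟩
  have h1 : qintZ x ((n : ℤ) + 1) = qint x (n + 1) := by
    simp only [qintZ, qint]; norm_cast
  have h2 : ((n : ℤ) + 1).toNat = n + 1 := by omega
  rw [h1, h2, add_sub_cancel_right, Int.toNat_natCast, mul_comm]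
  exact Finset.prod_range_succ _ _

lemma qbinom_eq_qfactInv (x : RatFunc ℚ) (N K : ℤ) :
    qbinom x N K = qfact x N.toNat * qfactInv x K * qfactInv x (N - K) := by
  by_cases h1 : 0 ≤ K
  · by_cases h2 : K ≤ N
    · rw [qbinom, if_pos ⟨h1, h2⟩, qfactInv, qfactInv, if_pos h1, if_pos (by omega),
        div_eq_mul_inv, mul_inv, mul_assoc]
    · rw [qbinom, if_neg (by omega), qfactInv_of_neg x (show N - K < 0 by omega), mul_zero]
  · rw [qbinom, if_neg (by omega), qfactInv_of_neg x (show K < 0 by omega), mul_zero, zero_mul]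

lemma qintZ_add {x : RatFunc ℚ} (hx : x ≠ 0) (u v : ℤ) :
    qintZ x (u + v) = qintZ x u + x ^ u * qintZ x v := by
  simp only [qintZ, zpow_add₀ hx]
  ring

lemma qintZ_X_natCast_ne_zero {n : ℕ} (hn : n ≠ 0) : qintZ RatFunc.X n ≠ 0 := by
  simpa [qintZ, qint] using qint_X_ne_zero hn

/-- A form of the `q`-Chu–Vandermonde summation in terms of reciprocal `q`-factorials. -/
lemma sum_qfactInv_eq (p : ℕ) (s d : ℤ) :
    ∑ u ∈ Finset.range (p + 1), (RatFunc.X : RatFunc ℚ) ^ ((u : ℤ) * (u + d)) *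
        (qfactInv RatFunc.X (p - u) * qfactInv RatFunc.X (s - u) *
          qfactInv RatFunc.X u * qfactInv RatFunc.X (u + d)) =
      qfact RatFunc.X (p + s + d).toNat * (qfactInv RatFunc.X p * qfactInv RatFunc.X s *
        qfactInv RatFunc.X (s + d) * qfactInv RatFunc.X (p + d)) := by
  induction p generalizing s d with
  | zero =>
    simp only [zero_add, Finset.sum_range_one, Nat.cast_zero, zero_mul, zpow_zero, sub_zero,
      qfactInv_zero, one_mul, mul_one]
    rcases lt_or_ge d 0 with hd | hd
    · simp [qfactInv_of_neg _ hd]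
    rcases lt_or_ge s 0 with hs | hs
    · simp [qfactInv_of_neg _ hs]
    have h := qfact_mul_qfactInv (s + d).toNat
    rw [Int.toNat_of_nonneg (by omega)] at h
    linear_combination (-qfactInv RatFunc.X s * qfactInv RatFunc.X d) * h
  | succ p ih =>
    have hX : (RatFunc.X : RatFunc ℚ) ≠ 0 := RatFunc.X_ne_zero
    refine mul_left_cancel₀ (qintZ_X_natCast_ne_zero p.succ_ne_zero) ?_
    have hterm : ∀ u : ℕ, qintZ RatFunc.X ((p + 1 : ℕ) : ℤ) *
        ((RatFunc.X : RatFunc ℚ) ^ ((u : ℤ) * (u + d)) *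
        (qfactInv RatFunc.X ((p + 1 : ℕ) - u) * qfactInv RatFunc.X (s - u) *
          qfactInv RatFunc.X u * qfactInv RatFunc.X (u + d))) =
        (RatFunc.X : RatFunc ℚ) ^ ((u : ℤ) * (u + d)) *
        (qfactInv RatFunc.X (p - u) * qfactInv RatFunc.X (s - u) *
          qfactInv RatFunc.X u * qfactInv RatFunc.X (u + d)) +
        (RatFunc.X : RatFunc ℚ) ^ ((u : ℤ) * (u + d) + (p + 1 - u)) *
        (qfactInv RatFunc.X (p + 1 - u) * qfactInv RatFunc.X (s - u) *
          qfactInv RatFunc.X (u - 1) * qfactInv RatFunc.X (u + d)) := by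
      intro u
      have e : ((p + 1 : ℕ) : ℤ) = ((p : ℤ) + 1 - u) + u := by push_cast; ring
      have h1 := qintZ_mul_qfactInv ((p : ℤ) + 1 - u)
      have h2 := qintZ_mul_qfactInv u
      have e1 : (p : ℤ) + 1 - u - 1 = p - u := by ring
      rw [e1] at h1
      rw [← h1, ← h2, zpow_add₀ hX, e, qintZ_add hX, add_sub_cancel_right]
      ring
    rw [Finset.mul_sum, Finset.sum_congr rfl fun u _ => hterm u, Finset.sum_add_distrib,
      Finset.sum_range_succ, Finset.sum_range_succ' _ (p + 1), ih s d]
    have hshift : ∀ v : ℕ,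
        (RatFunc.X : RatFunc ℚ) ^ (((v + 1 : ℕ) : ℤ) * ((v + 1 : ℕ) + d) + (p + 1 - (v + 1 : ℕ))) *
        (qfactInv RatFunc.X (p + 1 - (v + 1 : ℕ)) * qfactInv RatFunc.X (s - (v + 1 : ℕ)) *
          qfactInv RatFunc.X ((v + 1 : ℕ) - 1) * qfactInv RatFunc.X ((v + 1 : ℕ) + d)) =
        (RatFunc.X : RatFunc ℚ) ^ ((p : ℤ) + 1 + d) *
          ((RatFunc.X : RatFunc ℚ) ^ ((v : ℤ) * (v + (d + 1))) *
        (qfactInv RatFunc.X (p - v) * qfactInv RatFunc.X (s - 1 - v) *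
          qfactInv RatFunc.X v * qfactInv RatFunc.X (v + (d + 1)))) := by
      intro v
      rw [← mul_assoc (RatFunc.X ^ ((p : ℤ) + 1 + d)), ← zpow_add₀ hX]
      push_cast
      congr 2
      · ring
      · congr 2 <;> first | ring1 | (congr 1; ring1)
      · congr 1; ring
    rw [Finset.sum_congr rfl fun v _ => hshift v, ← Finset.mul_sum, ih (s - 1) (d + 1)]
    have z1 : qfactInv (RatFunc.X : RatFunc ℚ) ((p : ℤ) - ((p + 1 : ℕ) : ℤ)) = 0 :=
      qfactInv_of_neg _ (by push_cast; omega)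
    have z2 : qfactInv (RatFunc.X : RatFunc ℚ) (((0 : ℕ) : ℤ) - 1) = 0 :=
      qfactInv_of_neg _ (by norm_num)
    rw [z1, z2]
    have e1 : s - 1 + (d + 1) = s + d := by ring
    have e2 : (p : ℤ) + (s - 1) + (d + 1) = p + s + d := by ring
    have e3 : (p : ℤ) + (d + 1) = p + 1 + d := by ring
    rw [e1, e2, e3]
    push_cast
    rcases lt_or_ge (s + d) 0 with h | h
    · simp [qfactInv_of_neg _ h]
    have h1 := qintZ_mul_qfactInv ((p : ℤ) + 1 + d)
    have h2 := qintZ_mul_qfactInv s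
    have h3 := qintZ_mul_qfactInv ((p : ℤ) + 1)
    have h4 := qfact_toNat_of_pos (RatFunc.X) (show 0 < (p : ℤ) + 1 + s + d by omega)
    have h5 := qintZ_add hX ((p : ℤ) + 1 + d) s
    have e4 : (p : ℤ) + 1 + d - 1 = p + d := by ring
    have e5 : (p : ℤ) + 1 + s + d - 1 = p + s + d := by ring
    have e6 : (p : ℤ) + 1 + d + s = p + 1 + s + d := by ring
    rw [e4] at h1
    rw [add_sub_cancel_right] at h3
    rw [e5] at h4
    rw [e6] at h5
    rw [h4, h5, ← h1, ← h2, ← h3]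
    ring

/-- The summation over `ℓ` behind the deletion recurrence, for one fixed `k`. -/
lemma sum_qfactInv_shift (M N : ℕ) (k : ℤ) :
    ∑ l ∈ Finset.range (M + 1), (RatFunc.X : RatFunc ℚ) ^ (l ^ 2 + l) *
        (qfactInv RatFunc.X (M - l) * qfactInv RatFunc.X (N - l) *
          qfactInv RatFunc.X (l + k) * qfactInv RatFunc.X (l + 1 - k)) =
      (RatFunc.X : RatFunc ℚ) ^ (k * (k - 1)) * (qfact RatFunc.X (M + N + 1) *
        (qfactInv RatFunc.X (M + k) * qfactInv RatFunc.X (N + k) *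
        qfactInv RatFunc.X (N + 1 - k) * qfactInv RatFunc.X (M + 1 - k))) := by
  have hX : (RatFunc.X : RatFunc ℚ) ≠ 0 := RatFunc.X_ne_zero
  rcases lt_or_ge ((M : ℤ) + k) 0 with hneg | hnn
  · rw [qfactInv_of_neg _ hneg]
    simp only [zero_mul, mul_zero]
    refine Finset.sum_eq_zero fun l hl => ?_
    rw [Finset.mem_range] at hl
    simp [qfactInv_of_neg _ (show (l : ℤ) + k < 0 by omega)]
  obtain ⟨p, hp⟩ : ∃ p : ℕ, (M : ℤ) + k = p := ⟨(M + k).toNat, by omega⟩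
  have hV := sum_qfactInv_eq p (N + k) (1 - 2 * k)
  have e1 : (p : ℤ) + (N + k) + (1 - 2 * k) = (M + N + 1 : ℕ) := by push_cast; omega
  have e2 : (N : ℤ) + k + (1 - 2 * k) = N + 1 - k := by ring
  have e3 : (p : ℤ) + (1 - 2 * k) = M + 1 - k := by omega
  rw [e1, e2, e3, Int.toNat_natCast] at hV
  rw [hp, ← hV, Finset.mul_sum]
  have hterm : ∀ l u : ℕ, (l : ℤ) + k = u →
      (RatFunc.X : RatFunc ℚ) ^ (l ^ 2 + l) *
        (qfactInv RatFunc.X (M - l) * qfactInv RatFunc.X (N - l) *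
          qfactInv RatFunc.X (l + k) * qfactInv RatFunc.X (l + 1 - k)) =
      (RatFunc.X : RatFunc ℚ) ^ (k * (k - 1)) *
        ((RatFunc.X : RatFunc ℚ) ^ ((u : ℤ) * (u + (1 - 2 * k))) *
        (qfactInv RatFunc.X (p - u) * qfactInv RatFunc.X (N + k - u) *
          qfactInv RatFunc.X u * qfactInv RatFunc.X (u + (1 - 2 * k)))) := by
    intro l u h
    rw [← mul_assoc (RatFunc.X ^ (k * (k - 1))), ← zpow_add₀ hX, ← zpow_natCast, ← hp, ← h]
    congr 2
    · push_cast; ring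
    · congr 2 <;> congr 1 <;> ring
    · congr 1; ring
  rcases le_or_gt 0 k with hk | hk
  · obtain ⟨c, rfl⟩ := Int.eq_ofNat_of_zero_le hk
    obtain rfl : p = c + M := by omega
    symm
    rw [add_assoc c, Finset.sum_range_add _ c (M + 1), Finset.sum_eq_zero, zero_add]
    · exact Finset.sum_congr rfl fun l _ => (hterm l (c + l) (by push_cast; ring)).symm
    · intro u hu
      rw [Finset.mem_range] at hu
      simp [qfactInv_of_neg _ (show (u : ℤ) + (1 - 2 * (c : ℤ)) < 0 by omega)]
  · obtain ⟨c, rfl⟩ : ∃ c : ℕ, k = -c := ⟨(-k).toNat, by omega⟩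
    obtain rfl : M = c + p := by omega
    rw [add_assoc c, Finset.sum_range_add _ c (p + 1), Finset.sum_eq_zero, zero_add]
    · exact Finset.sum_congr rfl fun u _ => hterm (c + u) u (by push_cast; ring)
    · intro l hl
      rw [Finset.mem_range] at hl
      simp [qfactInv_of_neg _ (show (l : ℤ) + -(c : ℤ) < 0 by omega)]

/-- The products of `q`-binomials indexed by `m`, with the three factors of a cyclic vector of
length at least three that involve the first two entries split off. -/
lemma prod_qbinom_cyclic_add_three (x : RatFunc ℚ) (t : ℕ) (m : ℕ → ℕ) (k : ℤ) :
    ∏ i ∈ Finset.range (t + 3),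
        qbinom x ((m i : ℤ) + (m ((i + 1) % (t + 3)) : ℤ) + 1) ((m i : ℤ) + k) =
      (∏ i ∈ Finset.range t, qbinom x ((m (i + 2) : ℤ) + m (i + 3) + 1) (m (i + 2) + k)) *
        qbinom x ((m 0 : ℤ) + m 1 + 1) (m 0 + k) * qbinom x ((m 1 : ℤ) + m 2 + 1) (m 1 + k) *
        qbinom x ((m (t + 2) : ℤ) + m 0 + 1) (m (t + 2) + k) := by
  rw [Finset.prod_range_succ, Finset.prod_range_succ', Finset.prod_range_succ', Nat.mod_self,
    Nat.mod_eq_of_lt (show 0 + 1 < t + 3 by omega),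
    Nat.mod_eq_of_lt (show 0 + 1 + 1 < t + 3 by omega)]
  rw [Finset.prod_congr rfl fun i hi => by
    rw [Nat.mod_eq_of_lt (show i + 1 + 1 + 1 < t + 3 by have := Finset.mem_range.mp hi; omega)]]
  simp only [zero_add, Nat.reduceAdd, add_assoc]
  ring

/-- As `prod_qbinom_cyclic_add_three`, after the first two entries are replaced by `l`. -/
lemma prod_qbinom_cyclic_deleted (x : RatFunc ℚ) (t l : ℕ) (m : ℕ → ℕ) (k : ℤ) :
    ∏ i ∈ Finset.range (t + 2),
        qbinom x (((if i = 0 then l else m (i + 1) : ℕ) : ℤ) +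
          ((if (i + 1) % (t + 2) = 0 then l else m ((i + 1) % (t + 2) + 1) : ℕ) : ℤ) + 1)
          (((if i = 0 then l else m (i + 1) : ℕ) : ℤ) + k) =
      (∏ i ∈ Finset.range t, qbinom x ((m (i + 2) : ℤ) + m (i + 3) + 1) (m (i + 2) + k)) *
        qbinom x ((l : ℤ) + m 2 + 1) (l + k) *
        qbinom x ((m (t + 2) : ℤ) + l + 1) (m (t + 2) + k) := by
  rw [Finset.prod_range_succ, Finset.prod_range_succ', Nat.mod_self,
    Nat.mod_eq_of_lt (show 0 + 1 < t + 2 by omega)]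
  rw [Finset.prod_congr rfl fun i hi => by
    rw [Nat.mod_eq_of_lt (show i + 1 + 1 < t + 2 by have := Finset.mem_range.mp hi; omega)]]
  simp [add_assoc]

/-- The contribution of one index `k` to the deletion recurrence. -/
lemma qbinom_deletion (A B C R : ℕ) (k : ℤ) :
    qfact RatFunc.X A / qfact RatFunc.X (A + R + 1) *
        ((RatFunc.X : RatFunc ℚ) ^ (k * (k - 1)) * qbinom RatFunc.X ((A : ℤ) + B + 1) (A + k) *
          qbinom RatFunc.X ((B : ℤ) + C + 1) (B + k) *
          qbinom RatFunc.X ((R : ℤ) + A + 1) (R + k)) =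
      ∑ l ∈ Finset.range (A + 1), (RatFunc.X : RatFunc ℚ) ^ (l ^ 2 + l) *
        qbinom RatFunc.X A l * qbinom RatFunc.X ((B : ℤ) + C + 1) (B - l) *
        (qfact RatFunc.X l / qfact RatFunc.X (l + R + 1) *
          (qbinom RatFunc.X ((l : ℤ) + C + 1) (l + k) *
            qbinom RatFunc.X ((R : ℤ) + l + 1) (R + k))) := by
  have toNat_add (u v : ℕ) : ((u : ℤ) + v + 1).toNat = u + v + 1 := by omega
  have hterm : ∀ l : ℕ, (RatFunc.X : RatFunc ℚ) ^ (l ^ 2 + l) *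
        qbinom RatFunc.X A l * qbinom RatFunc.X ((B : ℤ) + C + 1) (B - l) *
        (qfact RatFunc.X l / qfact RatFunc.X (l + R + 1) *
          (qbinom RatFunc.X ((l : ℤ) + C + 1) (l + k) *
            qbinom RatFunc.X ((R : ℤ) + l + 1) (R + k))) =
      (qfact RatFunc.X A * qfact RatFunc.X (B + C + 1) * qfactInv RatFunc.X (C + 1 - k) *
        qfactInv RatFunc.X (R + k)) *
      ((RatFunc.X : RatFunc ℚ) ^ (l ^ 2 + l) *
        (qfactInv RatFunc.X (A - l) * qfactInv RatFunc.X (B - l) *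
          qfactInv RatFunc.X (l + k) * qfactInv RatFunc.X (l + 1 - k))) := by
    intro l
    have h1 := qfact_mul_qfactInv l
    have h2 := qfact_mul_qfactInv (l + C + 1)
    have h3 := div_self (qfact_X_ne_zero (l + R + 1))
    simp only [qbinom_eq_qfactInv, toNat_add, Int.toNat_natCast]
    rw [show (B : ℤ) + C + 1 - (B - l) = (l + C + 1 : ℕ) by push_cast; ring,
      show (l : ℤ) + C + 1 - (l + k) = C + 1 - k by ring,
      show (R : ℤ) + l + 1 - (R + k) = l + 1 - k by ring, show R + l + 1 = l + R + 1 by ring]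
    have h : (qfact RatFunc.X l * qfactInv RatFunc.X l) *
        (qfact RatFunc.X (l + C + 1) * qfactInv RatFunc.X (l + C + 1 : ℕ)) *
        (qfact RatFunc.X (l + R + 1) / qfact RatFunc.X (l + R + 1)) = 1 := by
      rw [h1, h2, h3, one_mul, one_mul]
    refine Eq.trans ?_ (one_mul _)
    rw [← h]
    ring
  rw [Finset.sum_congr rfl fun l _ => hterm l, ← Finset.mul_sum, sum_qfactInv_shift]
  have h3 := div_self (qfact_X_ne_zero (A + R + 1))
  simp only [qbinom_eq_qfactInv, toNat_add]
  rw [show (A : ℤ) + B + 1 - (A + k) = B + 1 - k by ring,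
    show (B : ℤ) + C + 1 - (B + k) = C + 1 - k by ring,
    show (R : ℤ) + A + 1 - (R + k) = A + 1 - k by ring, show R + A + 1 = A + R + 1 by ring]
  refine Eq.trans ?_ (one_mul _)
  rw [← h3]
  ring

/-- Deletion recurrence: for `r ≥ 3`, `s > 1`, nonnegative `m_i`, positive
`n_j`, `0 ≤ a ≤ s` and `2 ≤ b ≤ r`,
`F_{r,s}^{(b)}(m_1, m_2, …, m_r; n; a; q)
  = Σ_{ℓ=0}^{m_1} q^{ℓ²+ℓ} [m_1 choose ℓ] [m_2+m_3+1 choose m_2-ℓ]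
      F_{r-1,s}^{(b-1)}(ℓ, m_3, …, m_r; n; a; q)`. -/
theorem F_deletion (r s : ℕ) (hr : 3 ≤ r) (hs : 1 < s) (m n : ℕ → ℕ)
    (hn : ∀ j < s, 0 < n j) (a b : ℕ) (ha : a ≤ s) (hb2 : 2 ≤ b) (hbr : b ≤ r) :
    F r s a b m n RatFunc.X =
      ∑ ℓ ∈ Finset.range (m 0 + 1),
        (RatFunc.X : RatFunc ℚ) ^ (ℓ ^ 2 + ℓ) *
          qbinom RatFunc.X (m 0 : ℤ) (ℓ : ℤ) *
          qbinom RatFunc.X ((m 1 : ℤ) + m 2 + 1) ((m 1 : ℤ) - ℓ) *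
          F (r - 1) s a (b - 1) (fun i => if i = 0 then ℓ else m (i + 1)) n
            RatFunc.X := by
  obtain ⟨t, rfl⟩ : ∃ t, r = t + 3 := ⟨r - 3, by omega⟩
  obtain ⟨c, rfl⟩ : ∃ c, b = c + 1 := ⟨b - 1, by omega⟩
  have hX : (RatFunc.X : RatFunc ℚ) ≠ 0 := RatFunc.X_ne_zero
  have hpow : ∀ k : ℤ,
      (RatFunc.X : RatFunc ℚ) ^ ((a : ℤ) * k ^ 2 + (2 * ((c + 1 : ℕ) : ℤ) - 1) * (k * (k - 1) / 2)) =
        RatFunc.X ^ ((a : ℤ) * k ^ 2 + (2 * (c : ℤ) - 1) * (k * (k - 1) / 2)) *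
          RatFunc.X ^ (k * (k - 1)) := by
    intro k
    rw [← zpow_add₀ hX]
    congr 1
    have h2 : k * (k - 1) / 2 * 2 = k * (k - 1) := Int.ediv_mul_cancel (by
      simpa [mul_comm] using (Int.even_mul_succ_self (k - 1)).two_dvd)
    push_cast
    linear_combination h2
  simp only [F, Nat.add_sub_cancel, show t + 3 - 1 = t + 2 by omega,
    show t + 2 - 1 = t + 1 by omega, prod_qbinom_cyclic_add_three, prod_qbinom_cyclic_deleted,
    if_true, Nat.add_eq_zero_iff, one_ne_zero, and_false, if_false, hpow, Finset.mul_sum]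
  rw [Finset.sum_comm]
  refine Finset.sum_congr rfl fun k _ => ?_
  have key := congrArg (fun y => y * (qfact RatFunc.X (n 0) *
      qfact RatFunc.X (m (t + 2) + n (s - 1) + 1) / qfact RatFunc.X (n 0 + n (s - 1)) *
      ((-1) ^ k * RatFunc.X ^ ((a : ℤ) * k ^ 2 + (2 * (c : ℤ) - 1) * (k * (k - 1) / 2)) *
      (∏ i ∈ Finset.range t,
        qbinom RatFunc.X ((m (i + 2) : ℤ) + m (i + 3) + 1) (m (i + 2) + k)) *
      ∏ j ∈ Finset.range s,
        qbinom RatFunc.X ((n j : ℤ) + (n ((j + 1) % s) : ℤ)) ((n j : ℤ) + k))))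
    (qbinom_deletion (m 0) (m 1) (m 2) (m (t + 2)) k)
  simp only [Finset.sum_mul] at key
  convert key using 1
  · ring
  · exact Finset.sum_congr rfl fun l _ => by ring

end
end
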